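/- Let G=(V,E_L,E_R) and G'=(V',E'_L,E'_R) be achievement positional games with V∩V'=∅. If Left has a winning strategy on G as first player and Right has a winning strategy on G' as first player, then at least one of Left and Right has a winning strategy on the disjoint union G∪G' as first player. -/

import Mathlib

namespace APG

/-- The two players: Left and Right. -/
inductive Player : Type
  | L : Player
  | R : Player
deriving DecidableEq, Repr

/-- The opponent of a player. -/
def Player.other : Player → Player
  | .L => .R
  | .R => .L

/-- An achievement positional game: a finite vertex set together with the set of
blue edges (Left's winning sets) and the set of red edges (Right's winning sets). -/
structure Game : Type where
  V : Finset ℕ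
  EL : Finset (Finset ℕ)
  ER : Finset (Finset ℕ)

/-- The edges are nonempty subsets of the vertex set. -/
def WellFormed (G : Game) : Prop :=
  (∀ e ∈ G.EL, e ⊆ G.V ∧ e.Nonempty) ∧ (∀ e ∈ G.ER, e ⊆ G.V ∧ e.Nonempty)

/-- The winning sets of a given player. -/
def Game.edges (G : Game) : Player → Finset (Finset ℕ)
  | .L => G.EL
  | .R => G.ER

/-- The player who makes the `i`-th move (0-indexed) when `s` moves first. -/
def mover (s : Player) (i : ℕ) : Player := if i % 2 = 0 then s else s.other

/-- The set of vertices picked by player `p` along the history `h`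
(the chronological list of the moves played so far), when `s` moved first. -/
def picked (s p : Player) (h : List ℕ) : Finset ℕ :=
  ((Finset.range h.length).filter fun i => mover s i = p).image fun i => h.getD i 0

/-- The set `S` of picked vertices fills some edge of `E`. -/
def fills (E : Finset (Finset ℕ)) (S : Finset ℕ) : Prop := ∃ e ∈ E, e ⊆ S

/-- The game is over: some player has picked all the vertices of one of their edges. -/
def ended (G : Game) (s : Player) (h : List ℕ) : Prop :=
  fills G.EL (picked s .L h) ∨ fills G.ER (picked s .R h)

/-- `h` is a legal history: no vertex is picked twice, every picked vertex belongs to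
the board, and no move is made after the game has ended. -/
def ValidHist (G : Game) (s : Player) (h : List ℕ) : Prop :=
  h.Nodup ∧ (∀ x ∈ h, x ∈ G.V) ∧ ∀ k, k < h.length → ¬ ended G s (h.take k)

/-- A strategy: a map assigning to each position (history) a vertex to pick. -/
abbrev Strategy := List ℕ → ℕ

/-- Along `h`, every move of player `p` agrees with the strategy `σ`. -/
def Follows (s p : Player) (σ : Strategy) (h : List ℕ) : Prop :=
  ∀ k, k < h.length → mover s k = p → h.getD k 0 = σ (h.take k)

/-- A finished play: either the game has ended or all vertices have been picked. -/
def Complete (G : Game) (s : Player) (h : List ℕ) : Prop :=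
  ended G s h ∨ h.length = G.V.card

/-- The strategy `σ` of player `p` always suggests a legal move (an unpicked vertex)
whenever the game is not over and it is `p`'s turn. -/
def Legal (G : Game) (s p : Player) (σ : Strategy) : Prop :=
  ∀ h, ValidHist G s h → Follows s p σ h → ¬ ended G s h → h.length < G.V.card →
    mover s h.length = p → σ h ∈ G.V ∧ σ h ∉ h

/-- Player `p` has a winning strategy on `G` when `s` moves first: following it,
every finished play ends with `p` having filled one of their edges (and, the game
having ended right there, the opponent has not filled an edge first). -/
def WinsAs (G : Game) (s p : Player) : Prop :=
  ∃ σ : Strategy, Legal G s p σ ∧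
    ∀ h, ValidHist G s h → Follows s p σ h → Complete G s h →
      fills (G.edges p) (picked s p h)

/-- Player `p` has a non-losing strategy on `G` when `s` moves first: following it,
the opponent never fills one of their edges. -/
def NonLosingAs (G : Game) (s p : Player) : Prop :=
  ∃ σ : Strategy, Legal G s p σ ∧
    ∀ h, ValidHist G s h → Follows s p σ h → Complete G s h →
      ¬ fills (G.edges p.other) (picked s p.other h)

/-- The possible results of the game, for a fixed starting player. -/
inductive Result : Type
  | Lwin : Result
  | draw : Result
  | Rwin : Result
deriving DecidableEq, Repr

/-- The result of `G` with optimal play, when `s` moves first, is `r`: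
a win for a player means that player has a winning strategy, a draw means
both players have non-losing strategies. -/
def resultIs (G : Game) (s : Player) : Result → Prop
  | .Lwin => WinsAs G s .L
  | .Rwin => WinsAs G s .R
  | .draw => NonLosingAs G s .L ∧ NonLosingAs G s .R

/-- An outcome: the pair of results with optimal play
(when Left starts, when Right starts). -/
abbrev Outcome := Result × Result

/-- `G` has outcome `o`. -/
def hasOutcome (G : Game) (o : Outcome) : Prop :=
  resultIs G .L o.1 ∧ resultIs G .R o.2

/-- Numerical value of a result, from Left's point of view:
Right wins < draw < Left wins. -/
def Result.val : Result → ℕ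
  | .Rwin => 0
  | .draw => 1
  | .Lwin => 2

/-- The partial order `≤_L` on outcomes, comparing both components simultaneously
from Left's point of view. -/
def outLE (o o' : Outcome) : Prop := o.1.val ≤ o'.1.val ∧ o.2.val ≤ o'.2.val

def oL : Outcome := (.Lwin, .Lwin)
def oLminus : Outcome := (.Lwin, .draw)
def oN : Outcome := (.Lwin, .Rwin)
def oD : Outcome := (.draw, .draw)
def oRminus : Outcome := (.draw, .Rwin)
def oR : Outcome := (.Rwin, .Rwin)

/-- The updated game `G_u` after Left has picked `u`. -/
def subL (G : Game) (u : ℕ) : Game where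
  V := G.V.erase u
  EL := G.EL.image fun e => e.erase u
  ER := G.ER.filter fun e => u ∉ e

/-- The updated game `G^u` after Right has picked `u`. -/
def subR (G : Game) (u : ℕ) : Game where
  V := G.V.erase u
  EL := G.EL.filter fun e => u ∉ e
  ER := G.ER.image fun e => e.erase u

/-- The updated game `G_u^v` after Left has picked `u` and Right has picked `v`. -/
def updLR (G : Game) (u v : ℕ) : Game where
  V := (G.V.erase u).erase v
  EL := (G.EL.filter fun e => v ∉ e).image fun e => e.erase u
  ER := (G.ER.filter fun e => u ∉ e).image fun e => e.erase v

/-- The disjoint union of two games. -/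
def gunion (G G' : Game) : Game where
  V := G.V ∪ G'.V
  EL := G.EL ∪ G'.EL
  ER := G.ER ∪ G'.ER

theorem picked_append_self {s p : Player} {h : List ℕ} (x : ℕ) (hm : mover s h.length = p) :
    picked s p (h ++ [x]) = insert x (picked s p h) := by
  ext y
  simp only [picked, List.length_append, List.length_singleton, Finset.mem_image,
    Finset.mem_filter, Finset.mem_range, Finset.mem_insert]
  constructor
  · rintro ⟨i, ⟨hi, hp⟩, rfl⟩
    rcases Nat.lt_succ_iff_lt_or_eq.1 hi with hi | rfl
    · exact Or.inr ⟨i, ⟨hi, hp⟩, (List.getD_append _ _ _ _ hi).symm⟩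
    · left; simp
  · rintro (rfl | ⟨i, ⟨hi, hp⟩, rfl⟩)
    · exact ⟨h.length, ⟨by omega, hm⟩, by simp⟩
    · exact ⟨i, ⟨by omega, hp⟩, List.getD_append _ _ _ _ hi⟩

theorem picked_append_of_ne {s p : Player} {h : List ℕ} (x : ℕ) (hm : mover s h.length ≠ p) :
    picked s p (h ++ [x]) = picked s p h := by
  ext y
  simp only [picked, List.length_append, List.length_singleton, Finset.mem_image,
    Finset.mem_filter, Finset.mem_range]
  constructor
  · rintro ⟨i, ⟨hi, hp⟩, rfl⟩
    rcases Nat.lt_succ_iff_lt_or_eq.1 hi with hi | rfl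
    · exact ⟨i, ⟨hi, hp⟩, (List.getD_append _ _ _ _ hi).symm⟩
    · exact absurd hp hm
  · rintro ⟨i, ⟨hi, hp⟩, rfl⟩
    exact ⟨i, ⟨by omega, hp⟩, List.getD_append _ _ _ _ hi⟩

theorem Player.other_ne (p : Player) : p.other ≠ p := by cases p <;> decide

theorem Player.eq_or_eq_other (p q : Player) : q = p ∨ q = p.other := by
  cases p <;> cases q <;> decide

theorem mem_iff_picked (s p : Player) (h : List ℕ) (x : ℕ) :
    x ∈ h ↔ x ∈ picked s p h ∨ x ∈ picked s p.other h := by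
  induction h using List.reverseRecOn with
  | nil => simp [picked]
  | append_singleton h y ih =>
    rcases p.eq_or_eq_other (mover s h.length) with hm | hm
    · rw [picked_append_self y hm,
        picked_append_of_ne y (by rw [hm]; exact p.other_ne.symm)]
      simp only [List.mem_append, List.mem_singleton, Finset.mem_insert, ih]
      tauto
    · rw [picked_append_self y hm, picked_append_of_ne y (by rw [hm]; exact p.other_ne)]
      simp only [List.mem_append, List.mem_singleton, Finset.mem_insert, ih]
      tauto

theorem ended_iff (G : Game) (s p : Player) (h : List ℕ) :
    ended G s h ↔
      fills (G.edges p) (picked s p h) ∨ fills (G.edges p.other) (picked s p.other h) := by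
  cases p
  · exact Iff.rfl
  · exact or_comm

theorem mover_even {s : Player} {n : ℕ} (h : n % 2 = 0) : mover s n = s := by simp [mover, h]

theorem mover_odd {s : Player} {n : ℕ} (h : n % 2 = 1) : mover s n = s.other := by
  simp [mover, h]

theorem validHist_append {G : Game} {s : Player} {h : List ℕ} {x : ℕ} :
    ValidHist G s (h ++ [x]) ↔ ValidHist G s h ∧ ¬ ended G s h ∧ x ∈ G.V ∧ x ∉ h := by
  constructor
  · rintro ⟨h1, h2, h3⟩
    rw [List.nodup_append] at h1
    refine ⟨⟨h1.1, fun y hy => h2 y (by simp [hy]), fun k hk => ?_⟩, ?_, h2 x (by simp), ?_⟩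
    · have := h3 k (by simp; omega)
      rwa [List.take_append_of_le_length hk.le] at this
    · have := h3 h.length (by simp)
      rwa [List.take_append_of_le_length le_rfl, List.take_length] at this
    · intro hx
      exact h1.2.2 x hx x (by simp) rfl
  · rintro ⟨⟨h1, h2, h3⟩, h4, h5, h6⟩
    refine ⟨?_, ?_, fun k hk => ?_⟩
    · rw [List.nodup_append]
      refine ⟨h1, by simp, ?_⟩
      intro a ha b hb hab
      simp only [List.mem_singleton] at hb
      exact h6 (by rwa [← hb, ← hab])
    · intro y hy
      rcases List.mem_append.1 hy with hy | hy
      · exact h2 y hy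
      · rw [List.mem_singleton.1 hy]; exact h5
    · simp only [List.length_append, List.length_singleton] at hk
      rw [List.take_append_of_le_length (by omega)]
      rcases Nat.lt_succ_iff_lt_or_eq.1 hk with hk | rfl
      · exact h3 k hk
      · rwa [List.take_length]

theorem follows_append {s p : Player} {σ : Strategy} {h : List ℕ} {x : ℕ} :
    Follows s p σ (h ++ [x]) ↔ Follows s p σ h ∧ (mover s h.length = p → x = σ h) := by
  constructor
  · intro hf
    refine ⟨fun k hk hm => ?_, fun hm => ?_⟩
    · have := hf k (by simp; omega) hm
      rwa [List.take_append_of_le_length hk.le, List.getD_append _ _ _ _ hk] at this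
    · have := hf h.length (by simp) hm
      rw [List.take_append_of_le_length le_rfl, List.take_length] at this
      simpa using this
  · rintro ⟨hf, hx⟩ k hk hm
    simp only [List.length_append, List.length_singleton] at hk
    rw [List.take_append_of_le_length (by omega)]
    rcases Nat.lt_succ_iff_lt_or_eq.1 hk with hk | rfl
    · rw [List.getD_append _ _ _ _ hk]; exact hf k hk hm
    · rw [List.take_length]; simpa using hx hm

theorem ValidHist.length_le {G : Game} {s : Player} {h : List ℕ} (hv : ValidHist G s h) :
    h.length ≤ G.V.card := by
  rw [← List.toFinset_card_of_nodup hv.1]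
  exact Finset.card_le_card fun x hx => hv.2.1 x (List.mem_toFinset.1 hx)

theorem ValidHist.length_lt_iff {G : Game} {s : Player} {h : List ℕ} (hv : ValidHist G s h) :
    h.length < G.V.card ↔ ∃ v ∈ G.V, v ∉ h := by
  have hsub : h.toFinset ⊆ G.V := fun x hx => hv.2.1 x (List.mem_toFinset.1 hx)
  rw [← List.toFinset_card_of_nodup hv.1]
  constructor
  · intro hlt
    obtain ⟨v, hv1, hv2⟩ := Finset.exists_mem_notMem_of_card_lt_card hlt
    exact ⟨v, hv1, fun hh => hv2 (List.mem_toFinset.2 hh)⟩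
  · rintro ⟨v, hv1, hv2⟩
    exact Finset.card_lt_card ⟨hsub, fun hh => hv2 (List.mem_toFinset.1 (hh hv1))⟩

/-- On the board `V`, the player to move (with edges `E`, having picked `P`) can beat the
opponent (with edges `F`, having picked `Q`) even if the opponent is allowed to pass, and the
opponent gets to pass at most `k` times before losing. -/
inductive WinsWithPasses (V : Finset ℕ) (E F : Finset (Finset ℕ)) :
    ℕ → Finset ℕ → Finset ℕ → Prop
  | win {k : ℕ} {P Q : Finset ℕ} (u : ℕ) (hu : u ∈ V) (huP : u ∉ P) (huQ : u ∉ Q)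
      (hfill : fills E (insert u P)) : WinsWithPasses V E F k P Q
  | step {k : ℕ} {P Q : Finset ℕ} (u : ℕ) (hu : u ∈ V) (huP : u ∉ P) (huQ : u ∉ Q)
      (hsafe : ∀ v ∈ V, v ∉ insert u P → v ∉ Q → ¬ fills F (insert v Q))
      (hreply : ∀ v ∈ V, v ∉ insert u P → v ∉ Q →
        WinsWithPasses V E F (k + 1) (insert u P) (insert v Q))
      (hpass : WinsWithPasses V E F k (insert u P) Q) : WinsWithPasses V E F (k + 1) P Q

/-- On the board `V`, the player to move (with edges `E`, having picked `P`) can beat the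
opponent (with edges `F`, having picked `Q`). -/
inductive WinsFrom (V : Finset ℕ) (E F : Finset (Finset ℕ)) : Finset ℕ → Finset ℕ → Prop
  | win {P Q : Finset ℕ} (u : ℕ) (hu : u ∈ V) (huP : u ∉ P) (huQ : u ∉ Q)
      (hfill : fills E (insert u P)) : WinsFrom V E F P Q
  | step {P Q : Finset ℕ} (u : ℕ) (hu : u ∈ V) (huP : u ∉ P) (huQ : u ∉ Q)
      (hne : ∃ v ∈ V, v ∉ insert u P ∧ v ∉ Q)
      (hsafe : ∀ v ∈ V, v ∉ insert u P → v ∉ Q → ¬ fills F (insert v Q))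
      (hreply : ∀ v ∈ V, v ∉ insert u P → v ∉ Q → WinsFrom V E F (insert u P) (insert v Q)) :
      WinsFrom V E F P Q

/-- The opponent is to move, and after any of their moves the player with edges `E` wins. -/
def WinsSecondFrom (V : Finset ℕ) (E F : Finset (Finset ℕ)) (P Q : Finset ℕ) : Prop :=
  (∃ v ∈ V, v ∉ P ∧ v ∉ Q) ∧
    ∀ v ∈ V, v ∉ P → v ∉ Q → ¬ fills F (insert v Q) ∧ WinsFrom V E F P (insert v Q)

theorem WinsSecondFrom.winsFrom {V : Finset ℕ} {E F : Finset (Finset ℕ)} {P Q : Finset ℕ} {u : ℕ}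
    (hu : u ∈ V) (huP : u ∉ P) (huQ : u ∉ Q) (h : WinsSecondFrom V E F (insert u P) Q) :
    WinsFrom V E F P Q :=
  .step u hu huP huQ h.1 (fun v h1 h2 h3 => (h.2 v h1 h2 h3).1)
    fun v h1 h2 h3 => (h.2 v h1 h2 h3).2

theorem WinsFrom.exists_move {V : Finset ℕ} {E F : Finset (Finset ℕ)} {P Q : Finset ℕ}
    (h : WinsFrom V E F P Q) : ∃ u ∈ V, u ∉ P ∧ u ∉ Q ∧
      (fills E (insert u P) ∨ WinsSecondFrom V E F (insert u P) Q) := by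
  cases h with
  | win u hu huP huQ hfill => exact ⟨u, hu, huP, huQ, .inl hfill⟩
  | step u hu huP huQ hne hsafe hreply =>
    exact ⟨u, hu, huP, huQ, .inr ⟨hne, fun v h1 h2 h3 => ⟨hsafe v h1 h2 h3, hreply v h1 h2 h3⟩⟩⟩

theorem WinsWithPasses.exists_fresh {V : Finset ℕ} {E F : Finset (Finset ℕ)} {k : ℕ}
    {P Q : Finset ℕ} (h : WinsWithPasses V E F k P Q) : ∃ u ∈ V, u ∉ P ∧ u ∉ Q := by
  cases h with
  | win u hu huP huQ => exact ⟨u, hu, huP, huQ⟩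
  | step u hu huP huQ => exact ⟨u, hu, huP, huQ⟩

/-- Passing does not help the opponent of a player following a winning strategy: that player
may pretend that an arbitrary vertex has been picked instead. -/
theorem winsWithPasses_of_follows {G : Game} {p : Player} {σ : Strategy} (hσ : Legal G p p σ)
    (hwin : ∀ h, ValidHist G p h → Follows p p σ h → Complete G p h →
      fills (G.edges p) (picked p p h)) (k : ℕ) :
    ∀ h, ValidHist G p h → Follows p p σ h → ¬ ended G p h → h.length % 2 = 0 →
      G.V.card ≤ h.length + k → ∀ Q ⊆ picked p p.other h,
      WinsWithPasses G.V (G.edges p) (G.edges p.other) k (picked p p h) Q := by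
  suffices H : ∀ n, ∀ k h, G.V.card ≤ h.length + n → ValidHist G p h → Follows p p σ h →
      ¬ ended G p h → h.length % 2 = 0 → G.V.card ≤ h.length + k → ∀ Q ⊆ picked p p.other h,
      WinsWithPasses G.V (G.edges p) (G.edges p.other) k (picked p p h) Q from
    fun h h1 h2 h3 h4 h5 => H k k h h5 h1 h2 h3 h4 h5
  intro n
  induction n using Nat.strong_induction_on with
  | _ n ih =>
  intro k h hn hv hf he hpar hk Q hQ
  have hnotfull : ∀ h, ValidHist G p h → Follows p p σ h → ¬ ended G p h →
      h.length < G.V.card := fun h hv hf he =>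
    lt_of_le_of_ne hv.length_le fun heq =>
      he ((ended_iff G p p h).2 (.inl (hwin h hv hf (.inr heq))))
  have hlt := hnotfull h hv hf he
  have hm : mover p h.length = p := mover_even hpar
  obtain ⟨huV, huh⟩ := hσ h hv hf he hlt hm
  have hmem := mem_iff_picked p p h
  have huP : σ h ∉ picked p p h := fun hh => huh ((hmem _).2 (.inl hh))
  have huQ : σ h ∉ Q := fun hh => huh ((hmem _).2 (.inr (hQ hh)))
  have hP' := picked_append_self (σ h) hm
  have hQ' : picked p p.other (h ++ [σ h]) = picked p p.other h :=
    picked_append_of_ne (σ h) (by rw [hm]; exact p.other_ne.symm)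
  by_cases hfill : fills (G.edges p) (insert (σ h) (picked p p h))
  · exact .win _ huV huP huQ hfill
  have hv' : ValidHist G p (h ++ [σ h]) := validHist_append.2 ⟨hv, he, huV, huh⟩
  have hf' : Follows p p σ (h ++ [σ h]) := follows_append.2 ⟨hf, fun _ => rfl⟩
  have he' : ¬ ended G p (h ++ [σ h]) := by
    rw [ended_iff G p p, hP', hQ']
    rw [ended_iff G p p] at he
    tauto
  have hlen' : (h ++ [σ h]).length = h.length + 1 := by simp
  have hm' : mover p (h ++ [σ h]).length = p.other := mover_odd (by omega)
  have hmem' := mem_iff_picked p p (h ++ [σ h])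
  have key : ∀ w ∈ G.V, w ∉ h ++ [σ h] →
      ¬ fills (G.edges p.other) (insert w (picked p p.other h)) ∧
      ∀ k, G.V.card ≤ h.length + 1 + k → ∀ Q ⊆ insert w (picked p p.other h),
      WinsWithPasses G.V (G.edges p) (G.edges p.other) k (insert (σ h) (picked p p h)) Q := by
    intro w hw hwh
    have hP2 : picked p p (h ++ [σ h] ++ [w]) = insert (σ h) (picked p p h) := by
      rw [picked_append_of_ne w (by rw [hm']; exact p.other_ne), hP']
    have hQ2 : picked p p.other (h ++ [σ h] ++ [w]) = insert w (picked p p.other h) := by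
      rw [picked_append_self w hm', hQ']
    have hv2 : ValidHist G p (h ++ [σ h] ++ [w]) := validHist_append.2 ⟨hv', he', hw, hwh⟩
    have hf2 : Follows p p σ (h ++ [σ h] ++ [w]) :=
      follows_append.2 ⟨hf', fun hh => absurd (hm'.symm.trans hh) p.other_ne⟩
    have he2 : ¬ ended G p (h ++ [σ h] ++ [w]) := fun hh =>
      hfill (hP2 ▸ hwin _ hv2 hf2 (.inl hh))
    have hlen2 : (h ++ [σ h] ++ [w]).length = h.length + 2 := by simp
    refine ⟨fun hh => he2 ((ended_iff G p p _).2 (.inr (hQ2 ▸ hh))), fun k hk Q hQ => ?_⟩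
    rw [← hP2]
    exact ih (n - 1) (by omega) k _ (by omega) hv2 hf2 he2 (by omega) (by omega) Q (hQ2 ▸ hQ)
  obtain ⟨w₀, hw₀, hw₀h⟩ := hv'.length_lt_iff.1 (hnotfull _ hv' hf' he')
  obtain ⟨k, rfl⟩ : ∃ j, k = j + 1 := ⟨k - 1, by omega⟩
  have hreply : ∀ v ∈ G.V, v ∉ insert (σ h) (picked p p h) →
      ∃ w ∈ G.V, w ∉ h ++ [σ h] ∧ insert v Q ⊆ insert w (picked p p.other h) := by
    intro v hv hvP
    by_cases hvh : v ∈ h ++ [σ h]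
    · have hvQ : v ∈ picked p p.other h := by
        rcases (hmem' v).1 hvh with hh | hh
        · exact absurd (hP' ▸ hh) hvP
        · exact hQ' ▸ hh
      exact ⟨w₀, hw₀, hw₀h, (Finset.insert_subset hvQ hQ).trans (Finset.subset_insert _ _)⟩
    · exact ⟨v, hv, hvh, Finset.insert_subset_insert _ hQ⟩
  refine .step _ huV huP huQ (fun v hv hvP _ => ?_) (fun v hv hvP _ => ?_) ?_
  · obtain ⟨w, hw, hwh, hsub⟩ := hreply v hv hvP
    rintro ⟨e, heF, hes⟩
    exact (key w hw hwh).1 ⟨e, heF, hes.trans hsub⟩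
  · obtain ⟨w, hw, hwh, hsub⟩ := hreply v hv hvP
    exact (key w hw hwh).2 _ (by omega) _ hsub
  · exact (key w₀ hw₀ hw₀h).2 _ (by omega) _ (hQ.trans (Finset.subset_insert _ _))

theorem WellFormed.edges {G : Game} (hG : WellFormed G) (p : Player) :
    ∀ e ∈ G.edges p, e ⊆ G.V ∧ e.Nonempty := by
  cases p
  · exact hG.1
  · exact hG.2

theorem not_fills_empty {E : Finset (Finset ℕ)} (hE : ∀ e ∈ E, e.Nonempty) : ¬ fills E ∅ := by
  rintro ⟨e, he, hsub⟩
  exact (hE e he).ne_empty (Finset.subset_empty.1 hsub)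

theorem picked_nil (s p : Player) : picked s p [] = ∅ := by simp [picked]

theorem not_ended_nil {G : Game} (hG : WellFormed G) (p : Player) : ¬ ended G p [] := by
  rw [ended_iff G p p, picked_nil, picked_nil, not_or]
  exact ⟨not_fills_empty fun e he => (hG.edges _ e he).2,
    not_fills_empty fun e he => (hG.edges _ e he).2⟩

theorem WinsAs.exists_winsWithPasses {G : Game} (hG : WellFormed G) {p : Player}
    (h : WinsAs G p p) :
    ∃ k, WinsWithPasses G.V (G.edges p) (G.edges p.other) k ∅ ∅ := by
  obtain ⟨σ, hσ, hwin⟩ := h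
  refine ⟨G.V.card, ?_⟩
  have := winsWithPasses_of_follows hσ hwin G.V.card [] ⟨by simp, by simp, by simp⟩
    (fun k hk => by simp at hk) (not_ended_nil hG p) (by simp) (by simp) ∅ (by simp)
  rwa [picked_nil] at this

theorem WinsFrom.winsAs {G : Game} (hG : WellFormed G) {p : Player}
    (hN : WinsFrom G.V (G.edges p) (G.edges p.other) ∅ ∅) : WinsAs G p p := by
  classical
  let good (h : List ℕ) (u : ℕ) : Prop := u ∈ G.V ∧ u ∉ picked p p h ∧ u ∉ picked p p.other h ∧
    (fills (G.edges p) (insert u (picked p p h)) ∨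
      WinsSecondFrom G.V (G.edges p) (G.edges p.other) (insert u (picked p p h))
        (picked p p.other h))
  let σ : Strategy := fun h => if hu : ∃ u, good h u then hu.choose else 0
  have hσ : ∀ h, WinsFrom G.V (G.edges p) (G.edges p.other) (picked p p h)
      (picked p p.other h) → good h (σ h) := by
    intro h hW
    have hex : ∃ u, good h u := hW.exists_move
    simp only [σ, dif_pos hex]
    exact hex.choose_spec
  have inv : ∀ h, ValidHist G p h → Follows p p σ h → fills (G.edges p) (picked p p h) ∨
      ¬ fills (G.edges p.other) (picked p p.other h) ∧
      (h.length % 2 = 0 ∧ WinsFrom G.V (G.edges p) (G.edges p.other) (picked p p h)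
        (picked p p.other h) ∨
      h.length % 2 = 1 ∧ WinsSecondFrom G.V (G.edges p) (G.edges p.other) (picked p p h)
        (picked p p.other h)) := by
    intro h
    induction h using List.reverseRecOn with
    | nil =>
      intro _ _
      simp only [picked_nil]
      exact .inr ⟨not_fills_empty fun e he => (hG.edges _ e he).2, .inl ⟨rfl, hN⟩⟩
    | append_singleton h x ih =>
      intro hv hf
      obtain ⟨hv, he, hxV, hxh⟩ := validHist_append.1 hv
      obtain ⟨hf, hx⟩ := follows_append.1 hf
      rw [ended_iff G p p, not_or] at he
      have hlen : (h ++ [x]).length = h.length + 1 := by simp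
      rw [mem_iff_picked p p, not_or] at hxh
      rcases (ih hv hf).resolve_left he.1 with ⟨hF, ⟨hpar, hW⟩ | ⟨hpar, hW⟩⟩
      · have hm : mover p h.length = p := mover_even hpar
        rw [picked_append_self x hm,
          picked_append_of_ne x (by rw [hm]; exact p.other_ne.symm), hx hm]
        rcases (hσ h hW).2.2.2 with hfill | hS
        · exact .inl hfill
        · exact .inr ⟨hF, .inr ⟨by simp; omega, hS⟩⟩
      · have hm : mover p h.length = p.other := mover_odd hpar
        rw [picked_append_self x hm, picked_append_of_ne x (by rw [hm]; exact p.other_ne)]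
        obtain ⟨h1, h2⟩ := hW.2 x hxV hxh.1 hxh.2
        exact .inr ⟨h1, .inl ⟨by omega, h2⟩⟩
  refine ⟨σ, fun h hv hf he _ hm => ?_, fun h hv hf hc => ?_⟩
  · rw [ended_iff G p p, not_or] at he
    rcases (inv h hv hf).resolve_left he.1 with ⟨-, ⟨-, hW⟩ | ⟨hpar, -⟩⟩
    · obtain ⟨h1, h2, h3, -⟩ := hσ h hW
      exact ⟨h1, fun hh => ((mem_iff_picked p p h _).1 hh).elim h2 h3⟩
    · exact absurd ((mover_odd hpar).symm.trans hm) p.other_ne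
  · rcases inv h hv hf with hfill | ⟨hF, hW⟩
    · exact hfill
    rcases hc with hc | hc
    · rw [ended_iff G p p] at hc
      exact hc.resolve_right hF
    · have hfresh : ∃ v ∈ G.V, v ∉ picked p p h ∧ v ∉ picked p p.other h := by
        rcases hW with ⟨-, hW⟩ | ⟨-, hW⟩
        · obtain ⟨u, h1, h2, h3, -⟩ := hW.exists_move
          exact ⟨u, h1, h2, h3⟩
        · exact hW.1
      obtain ⟨v, h1, h2, h3⟩ := hfresh
      exact absurd hc (hv.length_lt_iff.2
        ⟨v, h1, fun hh => ((mem_iff_picked p p h _).1 hh).elim h2 h3⟩).ne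

section Union

variable {V V' : Finset ℕ} {E F E' F' : Finset (Finset ℕ)}

/-- Playing the two components in parallel: each time the opponent passes on `V` by moving on
`V'`, one either answers on `V'` or passes there by moving on `V`. -/
theorem WinsWithPasses.winsFrom_union (hd : Disjoint V V') (hE : ∀ e ∈ E, e ⊆ V)
    (hF : ∀ e ∈ F, e ⊆ V) (hE' : ∀ e ∈ E', e ⊆ V') (hF' : ∀ e ∈ F', e ⊆ V')
    {k : ℕ} {P Q : Finset ℕ} (h : WinsWithPasses V E F k P Q) :
    ∀ A B P' Q' : Finset ℕ, (∀ x ∈ V, x ∈ A ↔ x ∈ P) → (∀ x ∈ V, x ∈ B ↔ x ∈ Q) →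
      (∀ x ∈ V', x ∈ A ↔ x ∈ P') → (∀ x ∈ V', x ∈ B ↔ x ∈ Q') → ¬ fills (F ∪ F') B →
      (∀ j, k = j + 1 → ¬ WinsWithPasses V' F' E' j Q' P') →
      WinsFrom (V ∪ V') (E ∪ E') (F ∪ F') A B := by
  have hdis : ∀ x ∈ V, x ∉ V' := fun _ hx => Finset.disjoint_left.1 hd hx
  induction h with
  | @win k P Q u hu huP huQ hfill =>
    intro A B P' Q' hA hB _ _ _ _
    refine .win u (Finset.mem_union_left _ hu) (by rwa [hA u hu]) (by rwa [hB u hu]) ?_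
    obtain ⟨e, he, hes⟩ := hfill
    refine ⟨e, Finset.mem_union_left _ he, fun x hx => ?_⟩
    have := hE e he hx
    have := hes hx
    grind
  | @step k P Q u hu huP huQ hsafe hreply hpass ihreply ihpass =>
    intro A B P' Q' hA hB hA' hB' hnf hnW
    replace hnW : ¬ WinsWithPasses V' F' E' k Q' P' := hnW k rfl
    refine WinsSecondFrom.winsFrom (Finset.mem_union_left _ hu) (u := u) (by rwa [hA u hu])
      (by rwa [hB u hu]) ?_
    replace hA : ∀ x ∈ V, x ∈ insert u A ↔ x ∈ insert u P := by grind
    replace hA' : ∀ x ∈ V', x ∈ insert u A ↔ x ∈ P' := by grind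
    generalize insert u A = A at hA hA'
    obtain ⟨n, hn⟩ : ∃ n, (V' \ B).card = n := ⟨_, rfl⟩
    induction n using Nat.strong_induction_on generalizing A B P' Q' with
    | _ n ih =>
    constructor
    · obtain ⟨v, hv, h1, h2⟩ := hpass.exists_fresh
      exact ⟨v, Finset.mem_union_left _ hv, by rwa [hA v hv], by rwa [hB v hv]⟩
    intro v hv hvA hvB
    by_cases hvV : v ∈ V
    · have hnf' : ¬ fills (F ∪ F') (insert v B) := by
        rintro ⟨e, he, hes⟩
        rcases Finset.mem_union.1 he with he' | he'
        · refine hsafe v hvV (by rwa [← hA v hvV]) (by rwa [← hB v hvV]) ⟨e, he', fun x hx => ?_⟩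
          have := hF e he' hx
          have := hes hx
          grind
        · refine hnf ⟨e, he, fun x hx => ?_⟩
          have := hF' e he' hx
          have := hes hx
          grind
      refine ⟨hnf', ihreply v hvV (by rwa [← hA v hvV]) (by rwa [← hB v hvV]) _ _ P' Q' hA
        (by grind) hA' (by grind) hnf' ?_⟩
      rintro j hj
      obtain rfl : k = j := by omega
      exact hnW
    · have hvV' : v ∈ V' := (Finset.mem_union.1 hv).resolve_left hvV
      have hvP' : v ∉ P' := by rwa [← hA' v hvV']
      have hvQ' : v ∉ Q' := by rwa [← hB' v hvV']
      have hnf' : ¬ fills (F ∪ F') (insert v B) := by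
        rintro ⟨e, he, hes⟩
        rcases Finset.mem_union.1 he with he' | he'
        · refine hnf ⟨e, he, fun x hx => ?_⟩
          have := hF e he' hx
          have := hes hx
          grind
        · refine hnW (.win v hvV' hvQ' hvP' ⟨e, he', fun x hx => ?_⟩)
          have := hF' e he' hx
          have := hes hx
          grind
      refine ⟨hnf', ?_⟩
      replace hB : ∀ x ∈ V, x ∈ insert v B ↔ x ∈ Q := by grind
      replace hB' : ∀ x ∈ V', x ∈ insert v B ↔ x ∈ insert v Q' := by grind
      by_cases hpass' : ∀ j, k = j + 1 → ¬ WinsWithPasses V' F' E' j (insert v Q') P'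
      · exact ihpass _ _ P' (insert v Q') hA hB hA' hB' hnf' hpass'
      push Not at hpass'
      obtain ⟨j, rfl, hj⟩ := hpass'
      by_cases hfill : ∃ w ∈ V', w ∉ insert v Q' ∧ w ∉ P' ∧ fills E' (insert w P')
      · obtain ⟨w, hw, h1, h2, e, he, hes⟩ := hfill
        refine .win w (Finset.mem_union_right _ hw) (by rwa [hA' w hw]) (by rwa [hB' w hw])
          ⟨e, Finset.mem_union_right _ he, fun x hx => ?_⟩
        have := hE' e he hx
        have := hes hx
        grind
      push Not at hfill
      obtain ⟨w, hw, h1, h2, hnW'⟩ : ∃ w ∈ V', w ∉ insert v Q' ∧ w ∉ P' ∧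
          ¬ WinsWithPasses V' F' E' (j + 1) (insert v Q') (insert w P') := by
        by_contra hcon
        push Not at hcon
        exact hnW (.step v hvV' hvQ' hvP' hfill hcon hj)
      refine WinsSecondFrom.winsFrom (u := w) (Finset.mem_union_right _ hw)
        (by rwa [hA' w hw]) (by rwa [hB' w hw]) ?_
      refine ih _ ?_ (insert v B) (insert w P') (insert v Q') hB hB' hnf' hnW' (insert w A)
        (by grind) (by grind) rfl
      rw [← hn]
      apply Finset.card_lt_card
      rw [Finset.ssubset_iff_of_subset (by grind)]
      exact ⟨v, by grind, by grind⟩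

end Union

theorem WellFormed.gunion {G G' : Game} (hG : WellFormed G) (hG' : WellFormed G') :
    WellFormed (gunion G G') := by
  constructor <;> intro e he <;> rcases Finset.mem_union.1 he with he | he
  · exact ⟨(hG.1 e he).1.trans Finset.subset_union_left, (hG.1 e he).2⟩
  · exact ⟨(hG'.1 e he).1.trans Finset.subset_union_right, (hG'.1 e he).2⟩
  · exact ⟨(hG.2 e he).1.trans Finset.subset_union_left, (hG.2 e he).2⟩
  · exact ⟨(hG'.2 e he).1.trans Finset.subset_union_right, (hG'.2 e he).2⟩

/-- If Left wins `G` as first player and Right wins `G'` as first player, then on the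
disjoint union one of the two players has a winning strategy as first player. -/
theorem union_some_first_player_win (G G' : Game) (hG : WellFormed G) (hG' : WellFormed G')
    (hdisj : Disjoint G.V G'.V)
    (hL : WinsAs G .L .L) (hR : WinsAs G' .R .R) :
    WinsAs (gunion G G') .L .L ∨ WinsAs (gunion G G') .R .R := by
  classical
  have hex := hL.exists_winsWithPasses hG
  have hex' := hR.exists_winsWithPasses hG'
  have hw := Nat.find_spec hex
  have hw' := Nat.find_spec hex'
  have hU := hG.gunion hG'
  have hne : ∀ p, ¬ fills ((gunion G G').edges p) ∅ := fun p =>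
    not_fills_empty fun e he => (hU.edges p e he).2
  rcases le_total (Nat.find hex) (Nat.find hex') with hle | hle
  · left
    refine WinsFrom.winsAs hU ?_
    exact hw.winsFrom_union hdisj (fun e he => (hG.1 e he).1) (fun e he => (hG.2 e he).1)
      (fun e he => (hG'.1 e he).1) (fun e he => (hG'.2 e he).1) ∅ ∅ ∅ ∅ (by simp) (by simp)
      (by simp) (by simp) (hne .R) fun j hj => Nat.find_min hex' (by omega)
  · right
    refine WinsFrom.winsAs hU ?_
    have := hw'.winsFrom_union (E' := G.ER) (F' := G.EL) hdisj.symm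
      (fun e he => (hG'.2 e he).1) (fun e he => (hG'.1 e he).1)
      (fun e he => (hG.2 e he).1) (fun e he => (hG.1 e he).1) ∅ ∅ ∅ ∅ (by simp) (by simp)
      (by simp) (by simp) (Finset.union_comm G.EL G'.EL ▸ hne .L)
      fun j hj => Nat.find_min hex (by omega)
    rw [Finset.union_comm G'.V, Finset.union_comm G'.ER, Finset.union_comm G'.EL] at this
    exact this

end APG
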